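/- For every positive integer n and every Ferrers board F ∈ F_n, the number of matchings of shape F avoiding both 213 and 321 equals the number of pairs (D_0, D_F) where D_0 is a Dyck path of semilength n lying weakly below D_F such that no peak of D_0 lies strictly south and strictly west of any vertex of D_F. Consequently, |M_n(213,321)| = |A²_n|, where A²_n is the set of all such pairs over all F ∈ F_n. -/

import Mathlib

/-! ### Patterns of length 3 and 4 as permutations (0-indexed values) -/

def p123 : Equiv.Perm (Fin 3) :=
  ⟨![0,1,2], ![0,1,2], by intro x; fin_cases x <;> rfl, by intro x; fin_cases x <;> rfl⟩
def p132 : Equiv.Perm (Fin 3) :=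
  ⟨![0,2,1], ![0,2,1], by intro x; fin_cases x <;> rfl, by intro x; fin_cases x <;> rfl⟩
def p213 : Equiv.Perm (Fin 3) :=
  ⟨![1,0,2], ![1,0,2], by intro x; fin_cases x <;> rfl, by intro x; fin_cases x <;> rfl⟩
def p231 : Equiv.Perm (Fin 3) :=
  ⟨![1,2,0], ![2,0,1], by intro x; fin_cases x <;> rfl, by intro x; fin_cases x <;> rfl⟩
def p312 : Equiv.Perm (Fin 3) :=
  ⟨![2,0,1], ![1,2,0], by intro x; fin_cases x <;> rfl, by intro x; fin_cases x <;> rfl⟩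
def p321 : Equiv.Perm (Fin 3) :=
  ⟨![2,1,0], ![2,1,0], by intro x; fin_cases x <;> rfl, by intro x; fin_cases x <;> rfl⟩
def p1342 : Equiv.Perm (Fin 4) :=
  ⟨![0,2,3,1], ![0,3,1,2], by intro x; fin_cases x <;> rfl, by intro x; fin_cases x <;> rfl⟩
def p1324 : Equiv.Perm (Fin 4) :=
  ⟨![0,2,1,3], ![0,2,1,3], by intro x; fin_cases x <;> rfl, by intro x; fin_cases x <;> rfl⟩

/-! ### Perfect matchings of `[2n] = {1, …, 2n}` as finsets of pairs `(i,j)`, `i < j` -/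

/-- `M` is a perfect matching of `{1, …, 2n}`. -/
def IsPerfectMatching (n : ℕ) (M : Finset (ℕ × ℕ)) : Prop :=
  (∀ p ∈ M, p.1 < p.2 ∧ 1 ≤ p.1 ∧ p.2 ≤ 2 * n) ∧
  ∀ x, 1 ≤ x → x ≤ 2 * n → ∃! p, p ∈ M ∧ (p.1 = x ∨ p.2 = x)

/-- The matching `M` contains the pattern `τ ∈ S_k`: there are
`i_1 < i_2 < ⋯ < i_{2k}` with `(i_a, i_{2k+1-τ(a)}) ∈ M` for all `1 ≤ a ≤ k`
(written here 0-indexed). -/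
def MatchContains {k : ℕ} (τ : Equiv.Perm (Fin k)) (M : Finset (ℕ × ℕ)) : Prop :=
  ∃ f : Fin (2 * k) → ℕ, StrictMono f ∧
    ∀ a : Fin k,
      (f ⟨a.1, by have := a.isLt; omega⟩,
       f ⟨2 * k - 1 - (τ a).1, by have := (τ a).isLt; omega⟩) ∈ M

def MatchAvoids {k : ℕ} (τ : Equiv.Perm (Fin k)) (M : Finset (ℕ × ℕ)) : Prop :=
  ¬ MatchContains τ M

/-! ### Dyck paths as lists of booleans (`true` = east step, `false` = south step) -/

/-- A Dyck path of semilength `n`, from `(0,n)` to `(n,0)`, staying weakly above `y = n - x`. -/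
def IsDyckPath (n : ℕ) (t : List Bool) : Prop :=
  t.length = 2 * n ∧ t.count true = n ∧
  ∀ i, (t.take i).count false ≤ (t.take i).count true

/-- The height (distance above the diagonal) of the `i`-th vertex of the path `t`. -/
def pathHeight (t : List Bool) (i : ℕ) : ℤ :=
  ((t.take i).count true : ℤ) - ((t.take i).count false : ℤ)

/-- `s` lies weakly below `t` (for paths of the same semilength). -/
def WeaklyBelow (s t : List Bool) : Prop := ∀ i, pathHeight s i ≤ pathHeight t i

/-- The shape of a matching of `[2n]`: an east step for each opener, a south step for
each closer. -/
def shapeOf (n : ℕ) (M : Finset (ℕ × ℕ)) : List Bool :=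
  (List.range (2 * n)).map fun x => decide ((x + 1) ∈ M.image Prod.fst)

/-- Number of returns of a path: south steps ending on the diagonal. -/
def returnsOf (t : List Bool) : ℕ :=
  ((Finset.range t.length).filter fun i =>
    t[i]? = some false ∧ (t.take (i+1)).count true = (t.take (i+1)).count false).card

/-- Height sequence of a path, as natural numbers. -/
def hseq (t : List Bool) (i : ℕ) : ℕ := (t.take i).count true - (t.take i).count false

/-- `η(F)`: the number of indices `0 ≤ i ≤ 2n` with `h_i = 2`. -/
def etaOf (n : ℕ) (t : List Bool) : ℕ :=
  ((Finset.range (2 * n + 1)).filter fun i => hseq t i = 2).card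

/-! ### Full rook placements on Ferrers boards -/

/-- The square in column `c`, row `r` (both 1-indexed from the bottom left) belongs to the
Ferrers board with border path `t ∈ F_n`. -/
def InBoard (n : ℕ) (t : List Bool) (c r : ℕ) : Prop :=
  1 ≤ c ∧ 1 ≤ r ∧ ∃ i, c ≤ (t.take i).count true ∧ (t.take i).count false + r ≤ n

/-- `R` is a full rook placement on the Ferrers board with border path `t ∈ F_n`:
one rook in each of the `n` rows and `n` columns. -/
def IsFullRookPlacement (n : ℕ) (t : List Bool) (R : Finset (ℕ × ℕ)) : Prop :=
  (∀ p ∈ R, InBoard n t p.1 p.2) ∧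
  (∀ c, 1 ≤ c → c ≤ n → ∃! p, p ∈ R ∧ p.1 = c) ∧
  (∀ r, 1 ≤ r → r ≤ n → ∃! p, p ∈ R ∧ p.2 = r)

/-- The rooks of `R` lying in the rectangle `Γ(V_i)` determined by the `i`-th border vertex. -/
def rectRooks (n : ℕ) (t : List Bool) (R : Finset (ℕ × ℕ)) (i : ℕ) : Finset (ℕ × ℕ) :=
  R.filter fun p => p.1 ≤ (t.take i).count true ∧ p.2 + (t.take i).count false ≤ n

/-- Length of the longest increasing sequence (in both coordinates) in a finite point set. -/
def lisLen (S : Finset (ℕ × ℕ)) : ℕ :=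
  (S.powerset.filter fun T => ∀ p ∈ T, ∀ q ∈ T, p.1 < q.1 → p.2 < q.2).sup Finset.card

/-- The full rook placement `R` on the board with border `t ∈ F_n` contains the pattern `τ`:
some rectangle `Γ(V_i)` contains an occurrence of `τ`. -/
def PlacementContains {k : ℕ} (τ : Equiv.Perm (Fin k)) (n : ℕ) (t : List Bool)
    (R : Finset (ℕ × ℕ)) : Prop :=
  ∃ i ≤ 2 * n, ∃ f : Fin k → ℕ × ℕ,
    (∀ a, f a ∈ R ∧ (f a).1 ≤ (t.take i).count true ∧ (f a).2 + (t.take i).count false ≤ n) ∧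
    (∀ a b : Fin k, a < b → (f a).1 < (f b).1) ∧
    (∀ a b : Fin k, τ a < τ b → (f a).2 < (f b).2)

def PlacementAvoids {k : ℕ} (τ : Equiv.Perm (Fin k)) (n : ℕ) (t : List Bool)
    (R : Finset (ℕ × ℕ)) : Prop :=
  ¬ PlacementContains τ n t R

/-- `R` is board-minimal on the board with border `t`: every peak corner square holds a rook. -/
def BoardMinimal (n : ℕ) (t : List Bool) (R : Finset (ℕ × ℕ)) : Prop :=
  ∀ i, t[i]? = some true → t[i+1]? = some false →
    ((t.take (i+1)).count true, n - (t.take (i+1)).count false) ∈ R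

/-- Board-minimal full rook placements on boards of `F_n` avoiding the pattern `σ`,
recorded as pairs (border path, rook set). -/
def MinPlacements (n : ℕ) {k : ℕ} (σ : Equiv.Perm (Fin k)) :
    Set (List Bool × Finset (ℕ × ℕ)) :=
  {tR | IsDyckPath n tR.1 ∧ IsFullRookPlacement n tR.1 tR.2 ∧ BoardMinimal n tR.1 tR.2 ∧
        PlacementAvoids σ n tR.1 tR.2}

/-! ### Pattern avoidance in permutations -/

def PermContains {n k : ℕ} (τ : Equiv.Perm (Fin k)) (π : Equiv.Perm (Fin n)) : Prop :=
  ∃ f : Fin k → Fin n, StrictMono f ∧ ∀ a b : Fin k, τ a < τ b → π (f a) < π (f b)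

def PermAvoids {n k : ℕ} (τ : Equiv.Perm (Fin k)) (π : Equiv.Perm (Fin n)) : Prop :=
  ¬ PermContains τ π

/-- The full rook placement associated to a permutation of `[n]`. -/
def permPlacement {n : ℕ} (π : Equiv.Perm (Fin n)) : Finset (ℕ × ℕ) :=
  Finset.univ.image fun i : Fin n => ((i : ℕ) + 1, (π i : ℕ) + 1)

/-! ### Matchings with fixed points -/

/-- A (not necessarily perfect) matching on `{1, …, m}`: pairwise disjoint pairs. -/
def IsPartialMatching (m : ℕ) (M : Finset (ℕ × ℕ)) : Prop :=
  (∀ p ∈ M, p.1 < p.2 ∧ 1 ≤ p.1 ∧ p.2 ≤ m) ∧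
  ∀ p ∈ M, ∀ q ∈ M, p ≠ q → p.1 ≠ q.1 ∧ p.1 ≠ q.2 ∧ p.2 ≠ q.1 ∧ p.2 ≠ q.2

/-- The fixed points (unmatched vertices) of a matching on `{1, …, m}`. -/
def fixedPts (m : ℕ) (M : Finset (ℕ × ℕ)) : Finset ℕ :=
  (Finset.Icc 1 m).filter fun x => ∀ p ∈ M, p.1 ≠ x ∧ p.2 ≠ x

/-- The matched vertices of a matching on `{1, …, m}`. -/
def matchedSet (m : ℕ) (M : Finset (ℕ × ℕ)) : Finset ℕ :=
  (Finset.Icc 1 m).filter fun x => ∃ p ∈ M, p.1 = x ∨ p.2 = x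

/-- The rank (1-based) of `x` inside the finset `S`. -/
def rankIn (S : Finset ℕ) (x : ℕ) : ℕ := (S.filter (· ≤ x)).card

/-- The matching obtained by removing the fixed points and relabeling increasingly. -/
def relabeled (m : ℕ) (M : Finset (ℕ × ℕ)) : Finset (ℕ × ℕ) :=
  M.image fun p => (rankIn (matchedSet m M) p.1, rankIn (matchedSet m M) p.2)

/-! ### Set partitions -/

/-- `(i,j)` is an arc of the set partition `P` of `{1, …, n}`: `i < j` lie in a common block
with no element of that block strictly between them. -/
def PartArc {n : ℕ} (P : Finpartition (Finset.Icc 1 n)) (i j : ℕ) : Prop :=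
  i < j ∧ ∃ B ∈ P.parts, i ∈ B ∧ j ∈ B ∧ ∀ x ∈ B, ¬(i < x ∧ x < j)

/-- The set partition `P` contains the pattern `τ ∈ S_k`. -/
def PartContains {k n : ℕ} (τ : Equiv.Perm (Fin k)) (P : Finpartition (Finset.Icc 1 n)) : Prop :=
  ∃ f : Fin (2 * k) → ℕ, StrictMono f ∧
    ∀ a : Fin k,
      PartArc P (f ⟨a.1, by have := a.isLt; omega⟩)
        (f ⟨2 * k - 1 - (τ a).1, by have := (τ a).isLt; omega⟩)

def PartAvoids {k n : ℕ} (τ : Equiv.Perm (Fin k)) (P : Finpartition (Finset.Icc 1 n)) : Prop :=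
  ¬ PartContains τ P

/-! ### Counting functions -/

/-- `|M_n(τ)|`: the number of `τ`-avoiding perfect matchings of `[2n]`. -/
noncomputable def mcount {k : ℕ} (τ : Equiv.Perm (Fin k)) (n : ℕ) : ℕ :=
  {M : Finset (ℕ × ℕ) | IsPerfectMatching n M ∧ MatchAvoids τ M}.ncard

/-- `|M_n(σ,τ)|`: the number of perfect matchings of `[2n]` avoiding both `σ` and `τ`. -/
noncomputable def mcount2 {k : ℕ} (σ τ : Equiv.Perm (Fin k)) (n : ℕ) : ℕ :=
  {M : Finset (ℕ × ℕ) | IsPerfectMatching n M ∧ MatchAvoids σ M ∧ MatchAvoids τ M}.ncard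

/-- `|P_n(τ)|`: the number of `τ`-avoiding set partitions of `[n]`. -/
noncomputable def pcount {k : ℕ} (τ : Equiv.Perm (Fin k)) (n : ℕ) : ℕ :=
  Nat.card {P : Finpartition (Finset.Icc 1 n) // PartAvoids τ P}

/-- `|P_n(σ,τ)|`: the number of set partitions of `[n]` avoiding both `σ` and `τ`. -/
noncomputable def pcount2 {k : ℕ} (σ τ : Equiv.Perm (Fin k)) (n : ℕ) : ℕ :=
  Nat.card {P : Finpartition (Finset.Icc 1 n) // PartAvoids σ P ∧ PartAvoids τ P}

/-- `|S_n(τ)|`: the number of `τ`-avoiding permutations of `[n]`. -/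
noncomputable def scount {k : ℕ} (τ : Equiv.Perm (Fin k)) (n : ℕ) : ℕ :=
  Nat.card {π : Equiv.Perm (Fin n) // PermAvoids τ π}

/-- The bottom path `s` has a peak strictly south and strictly west of some vertex of the
top path `t` (both of semilength `n`). -/
def HasSWPeak (n : ℕ) (s t : List Bool) : Prop :=
  ∃ i j, s[i]? = some true ∧ s[i + 1]? = some false ∧ j ≤ 2 * n ∧
    (s.take (i + 1)).count true < (t.take j).count true ∧
    n - (s.take (i + 1)).count false < n - (t.take j).count false

/-!
Number the rows of the board from the top by `0, …, n - 1`, in the order of the south steps of its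
border, and let `X r` be the length of row `r`. A matching of the given shape joins the `r`-th
closer to the `π r`-th opener for a permutation `π` with `π r < X r` for all `r`, and it contains
`213` or `321` exactly when some rows `a < b < c` satisfy `π b < π c < X a` with `π a` not between
`π b` and `π c`. Given such a triple, walking from `a` down to `b` produces one in which the first
two rows are adjacent.

Encode `π` by the shifted Lehmer code `x r = r + 1 + #{k > r | π k < π r}`. Since `X` is monotone,
`π r < X r` for all `r` if and only if `x r ≤ X r` for all `r`. For adjacent rows `q`, `r` a
forbidden triple `q, r, c` exists exactly when `x q ≠ x r` and `x r < X q`. The codes of the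
avoiding permutations are therefore monotone, and they are the row lengths of the Dyck paths below
the border in which no peak, that is no step `x q < x r` between adjacent rows, has `x r < X q`:
this inequality says that the peak lies strictly southwest of a vertex of the border.
-/

open Finset

section ShiftedLehmer

variable {n : ℕ}

/-- The positions `k` with `k ≤ r` or `π k < π r`, which are counted by the shifted Lehmer code. -/
def lehmerSet (π : Equiv.Perm (Fin n)) (r : Fin n) : Finset (Fin n) := {k | k ≤ r ∨ π k < π r}

/-- The Lehmer code of `π` in the normalization `r + 1 + #{k > r | π k < π r}`, so that the
entry at `r` ranges over `(r, n]`. -/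
def shiftedLehmer (π : Equiv.Perm (Fin n)) (r : Fin n) : ℕ := #(lehmerSet π r)

lemma mem_lehmerSet {π : Equiv.Perm (Fin n)} {r k : Fin n} :
    k ∈ lehmerSet π r ↔ k ≤ r ∨ π k < π r := by
  simp [lehmerSet]

lemma lt_shiftedLehmer (π : Equiv.Perm (Fin n)) (r : Fin n) : (r : ℕ) < shiftedLehmer π r := by
  have h : #(Iic r) ≤ #(lehmerSet π r) :=
    card_le_card fun k hk => mem_lehmerSet.2 (Or.inl (mem_Iic.1 hk))
  rwa [Fin.card_Iic] at h

lemma shiftedLehmer_le (π : Equiv.Perm (Fin n)) (r : Fin n) : shiftedLehmer π r ≤ n :=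
  card_finset_fin_le _

lemma shiftedLehmer_eq_card_values (π : Equiv.Perm (Fin n)) (r : Fin n) :
    shiftedLehmer π r = #{v | π.symm v < r ∨ v ≤ π r} := by
  refine card_equiv π fun k => ?_
  simp only [mem_lehmerSet, mem_filter_univ, Equiv.symm_apply_apply, le_iff_eq_or_lt,
    π.injective.eq_iff]
  tauto

lemma shiftedLehmer_lt_of_eq_below {π σ : Equiv.Perm (Fin n)} {r : Fin n}
    (below : ∀ k < r, π k = σ k) (hr : π r < σ r) : shiftedLehmer π r < shiftedLehmer σ r := by
  have symm_below (v : Fin n) (hv : π.symm v < r) : σ.symm v = π.symm v := by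
    rw [Equiv.symm_apply_eq, ← below _ hv, Equiv.apply_symm_apply]
  simp only [shiftedLehmer_eq_card_values]
  refine card_lt_card <| (ssubset_iff_of_subset fun v hv => ?_).2 ⟨σ r, by simp, fun hmem => ?_⟩
  · rw [mem_filter_univ] at hv ⊢
    exact hv.imp (fun h => (symm_below v h).trans_lt h) fun h => h.trans hr.le
  · rw [mem_filter_univ] at hmem
    obtain h | h := hmem
    · have := symm_below _ h
      rw [Equiv.symm_apply_apply] at this
      exact h.ne this.symm
    · exact h.not_gt hr

lemma shiftedLehmer_injective : Function.Injective (shiftedLehmer (n := n)) := by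
  intro π σ hcode
  ext1 r
  induction r using WellFoundedLT.induction with
  | ind r below =>
    obtain h | h | h := lt_trichotomy (π r) (σ r)
    · exact absurd (congrFun hcode r) (shiftedLehmer_lt_of_eq_below below h).ne
    · exact h
    · exact absurd (congrFun hcode r).symm
        (shiftedLehmer_lt_of_eq_below (fun k hk => (below k hk).symm) h).ne

lemma exists_shiftedLehmer_eq {x : Fin n → ℕ} (hx : ∀ r : Fin n, (r : ℕ) < x r ∧ x r ≤ n) :
    ∃ π, shiftedLehmer π = x := by
  let codes := Fintype.piFinset fun r : Fin n => Ioc (r : ℕ) n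
  have card_codes : #codes = n.factorial := by
    simp only [codes, Fintype.card_piFinset, Nat.card_Ioc]
    rw [Fin.prod_univ_eq_prod_range (fun r => n - r), ← Nat.descFactorial_eq_prod_range,
      Nat.descFactorial_self]
  have maps : ∀ π ∈ (univ : Finset (Equiv.Perm (Fin n))), shiftedLehmer π ∈ codes := fun π _ =>
    Fintype.mem_piFinset.2 fun r => mem_Ioc.2 ⟨lt_shiftedLehmer π r, shiftedLehmer_le π r⟩
  obtain ⟨π, -, hπ⟩ := surjOn_of_injOn_of_card_le _ maps shiftedLehmer_injective.injOn
    (by rw [card_codes, card_univ, Fintype.card_perm, Fintype.card_fin])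
    (mem_coe.2 <| Fintype.mem_piFinset.2 fun r => mem_Ioc.2 (hx r) : x ∈ (codes : Set _))
  exact ⟨π, hπ⟩

end ShiftedLehmer

section ForbiddenTriples

variable {n : ℕ} {X : Fin n → ℕ} {π : Equiv.Perm (Fin n)}

/-- Rows `a < b < c` of the board with row lengths `X` whose rooks, placed in the columns `π a`,
`π b`, `π c`, form one of the two forbidden patterns inside the rectangle of columns reaching
row `a`: the first alternative is `321`, the second is `213`. -/
def IsForbiddenTriple (X : Fin n → ℕ) (π : Equiv.Perm (Fin n)) (a b c : Fin n) : Prop :=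
  a < b ∧ b < c ∧ π b < π c ∧ π c < X a ∧ (π a < π b ∨ π c < π a)

lemma card_filter_perm_lt (π : Equiv.Perm (Fin n)) (m : ℕ) : #{k | (π k : ℕ) < m} = min n m := by
  rw [← Fin.card_filter_val_lt]
  exact card_equiv π (by simp)

lemma forall_lt_iff_forall_shiftedLehmer_le (hX : Monotone X) :
    (∀ r, π r < X r) ↔ ∀ r, shiftedLehmer π r ≤ X r := by
  refine ⟨fun hπ r => ?_, fun hcode r => ?_⟩
  · have hsub : lehmerSet π r ⊆ ({k | (π k : ℕ) < X r} : Finset _) := fun k hk => by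
      rw [mem_filter_univ]
      obtain h | h := mem_lehmerSet.1 hk
      exacts [(hπ k).trans_le (hX h), (Fin.lt_def.1 h).trans (hπ r)]
    exact (card_le_card hsub).trans (card_filter_perm_lt π _ ▸ min_le_right ..)
  · by_contra! hr
    have hsub : ({k | (π k : ℕ) < X r} : Finset _) ⊂ lehmerSet π r :=
      (ssubset_iff_of_subset fun k hk => mem_lehmerSet.2 <| .inr <|
        ((mem_filter_univ _).1 hk).trans_le hr).2 ⟨r, mem_lehmerSet.2 (.inl le_rfl), by simpa⟩
    have hlt : min n (X r) < shiftedLehmer π r := card_filter_perm_lt π (X r) ▸ card_lt_card hsub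
    have := hcode r
    omega

lemma lehmerSet_ssubset {q r : Fin n} (hqr : q < r) (hπ : π q < π r) :
    lehmerSet π q ⊂ lehmerSet π r := by
  refine (ssubset_iff_of_subset fun k hk => ?_).2
    ⟨r, mem_lehmerSet.2 (.inl le_rfl), by simp [mem_lehmerSet, hqr, hπ.le]⟩
  exact mem_lehmerSet.2 ((mem_lehmerSet.1 hk).imp hqr.le.trans' hπ.trans')

lemma lehmerSet_subset_of_covBy {q r : Fin n} (hqr : q ⋖ r) (hπ : π r < π q) :
    lehmerSet π r ⊆ lehmerSet π q := fun k hk => by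
  rw [mem_lehmerSet] at hk ⊢
  obtain h | h := hk
  · obtain rfl | h := h.eq_or_lt
    exacts [.inr hπ, .inl (hqr.le_of_lt h)]
  · exact .inr (h.trans hπ)

lemma shiftedLehmer_lt_of_isForbiddenTriple (hX : Monotone X) (hπ : ∀ r, π r < X r)
    {q r k : Fin n} (hqr : q ⋖ r) (h : IsForbiddenTriple X π q r k) :
    shiftedLehmer π r < X q := by
  obtain ⟨-, hrk, hrk', hkq, -⟩ := h
  have hsub : lehmerSet π r ⊂ ({j | (π j : ℕ) < X q} : Finset _) := by
    refine (ssubset_iff_of_subset fun j hj => ?_).2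
      ⟨k, by simpa, by simp [mem_lehmerSet, hrk, hrk'.le]⟩
    have hr : (π r : ℕ) < X q := (Fin.lt_def.1 hrk').trans hkq
    refine (mem_filter_univ _).2 ?_
    obtain hj | hj := mem_lehmerSet.1 hj
    · obtain rfl | hj := hj.eq_or_lt
      exacts [hr, (hπ j).trans_le (hX (hqr.le_of_lt hj))]
    · exact (Fin.lt_def.1 hj).trans hr
  exact (card_lt_card hsub).trans_le (card_filter_perm_lt π _ ▸ min_le_right ..)

lemma shiftedLehmer_ne_of_isForbiddenTriple {q r k : Fin n} (hqr : q ⋖ r)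
    (h : IsForbiddenTriple X π q r k) : shiftedLehmer π r ≠ shiftedLehmer π q := by
  obtain ⟨-, hrk, hrk', -, hlt | hlt⟩ := h
  · exact (card_lt_card (lehmerSet_ssubset hqr.lt hlt)).ne'
  · have hsub := lehmerSet_subset_of_covBy hqr (hrk'.trans hlt)
    refine (card_lt_card <| (ssubset_iff_of_subset hsub).2 ⟨k, ?_, ?_⟩).ne
    · simp [mem_lehmerSet, hlt]
    · simp [mem_lehmerSet, hrk, hrk'.le]

lemma lt_of_notMem_lehmerSet {r k : Fin n} (hk : k ∉ lehmerSet π r) : r < k ∧ π r < π k := by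
  rw [mem_lehmerSet, not_or, not_le, not_lt] at hk
  exact ⟨hk.1, hk.2.lt_of_ne (π.injective.ne hk.1.ne)⟩

lemma exists_isForbiddenTriple_of_covBy (hXn : ∀ r, X r ≤ n) (hπ : ∀ r, π r < X r)
    {q r : Fin n} (hqr : q ⋖ r) (hne : shiftedLehmer π r ≠ shiftedLehmer π q)
    (hlt : shiftedLehmer π r < X q) : ∃ k, IsForbiddenTriple X π q r k := by
  obtain h | h := (π.injective.ne hqr.lt.ne).lt_or_gt
  · have hcard : #(lehmerSet π r) < #{k | (π k : ℕ) < X q} := by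
      rwa [card_filter_perm_lt, min_eq_right (hXn q)]
    obtain ⟨k, hkX, hk⟩ := exists_mem_notMem_of_card_lt_card hcard
    obtain ⟨hrk, hrk'⟩ := lt_of_notMem_lehmerSet hk
    exact ⟨k, hqr.lt, hrk, hrk', (mem_filter_univ k).1 hkX, .inl h⟩
  · have hcard : #(lehmerSet π r) < #(lehmerSet π q) :=
      (card_le_card (lehmerSet_subset_of_covBy hqr h)).lt_of_ne hne
    obtain ⟨k, hkq, hk⟩ := exists_mem_notMem_of_card_lt_card hcard
    obtain ⟨hrk, hrk'⟩ := lt_of_notMem_lehmerSet hk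
    have hkq : π k < π q := (mem_lehmerSet.1 hkq).resolve_left (hqr.lt.trans hrk).not_ge
    exact ⟨k, hqr.lt, hrk, hrk', (Fin.lt_def.1 hkq).trans (hπ q), .inr hkq⟩

lemma IsForbiddenTriple.exists_covBy (hX : Monotone X) {a b c : Fin n}
    (h : IsForbiddenTriple X π a b c) : ∃ q r, q ⋖ r ∧ IsForbiddenTriple X π q r c := by
  obtain ⟨hab, hbc, hbc', hcX, ha⟩ := h
  -- Among the rows from `a` up to `b`, the last one whose rook lies outside the columns between
  -- `π b` and `π c` is followed by a row whose rook lies within them.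
  let outer : Finset (Fin n) := {k | a ≤ k ∧ k < b ∧ (π k < π b ∨ π c < π k)}
  obtain ⟨q, hq, hmax⟩ := outer.exists_max_image id ⟨a, by simp [outer, hab, ha]⟩
  obtain ⟨haq, hqb, hq⟩ := (mem_filter_univ _).1 hq
  obtain ⟨r, hqr, hrb⟩ := exists_covBy_le_of_lt hqb
  have hcq : (π c : ℕ) < X q := hcX.trans_le (hX haq)
  have inner : π b ≤ π r ∧ π r ≤ π c := by
    obtain rfl | hrb := hrb.eq_or_lt
    · exact ⟨le_rfl, hbc'.le⟩
    · by_contra hout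
      refine hqr.lt.not_ge (hmax r <| (mem_filter_univ _).2 ⟨haq.trans hqr.le, hrb, ?_⟩)
      rwa [not_and_or, not_le, not_le] at hout
  have hrc : r < c := hrb.trans_lt hbc
  exact ⟨q, r, hqr, hqr.lt, hrc, inner.2.lt_of_ne (π.injective.ne hrc.ne), hcq,
    hq.imp inner.1.trans_lt' id⟩

/-- The row lengths of the Dyck paths weakly below the path with row lengths `X` and without a
peak strictly southwest of one of its vertices: a peak between rows `q ⋖ r` is a strict increase
`x q < x r`, and it lies southwest of a vertex exactly when `x r < X q`. -/
def admissibleRows (X : Fin n → ℕ) : Set (Fin n → ℕ) :=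
  {x | (∀ r : Fin n, (r : ℕ) < x r ∧ x r ≤ X r) ∧ ∀ q r, q ⋖ r → x r = x q ∨ X q ≤ x r}

lemma bijOn_shiftedLehmer (hX : Monotone X) (hXn : ∀ r, X r ≤ n) :
    Set.BijOn shiftedLehmer
      {π | (∀ r, (π r : ℕ) < X r) ∧ ∀ a b c, ¬ IsForbiddenTriple X π a b c} (admissibleRows X) := by
  refine ⟨fun π ⟨hπ, havoid⟩ => ⟨fun r => ⟨lt_shiftedLehmer π r,
    (forall_lt_iff_forall_shiftedLehmer_le hX).1 hπ r⟩, fun q r hqr => ?_⟩,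
    shiftedLehmer_injective.injOn, fun x ⟨hx, hstep⟩ => ?_⟩
  · by_contra! h
    obtain ⟨k, hk⟩ := exists_isForbiddenTriple_of_covBy hXn hπ hqr h.1 h.2
    exact havoid q r k hk
  · obtain ⟨π, rfl⟩ := exists_shiftedLehmer_eq fun r => ⟨(hx r).1, (hx r).2.trans (hXn r)⟩
    have hπ : ∀ r, (π r : ℕ) < X r :=
      (forall_lt_iff_forall_shiftedLehmer_le hX).2 fun r => (hx r).2
    refine ⟨π, ⟨hπ, fun a b c habc => ?_⟩, rfl⟩
    obtain ⟨q, r, hqr, h⟩ := habc.exists_covBy hX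
    exact (hstep q r hqr).elim (shiftedLehmer_ne_of_isForbiddenTriple hqr h)
      (shiftedLehmer_lt_of_isForbiddenTriple hX hπ hqr h).not_ge

end ForbiddenTriples

section StepPositions

variable {α : Type*} [DecidableEq α] {l : List α} {a : α} {i k : ℕ}

lemma lt_count_take_iff (hk : k < l.count a) : k < (l.take i).count a ↔ l.idxOfNth a k < i := by
  induction l generalizing i k with
  | nil => simp at hk
  | cons b l ih =>
    cases i with
    | zero => simp
    | succ i => by_cases hb : b = a <;> cases k <;> simp_all

lemma count_take_idxOfNth (hk : k < l.count a) : (l.take (l.idxOfNth a k)).count a = k := by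
  rw [← List.countBefore_eq_count_take, List.countBefore_idxOfNth_of_lt_count hk]

lemma idxOfNth_count_take (h : l[i]? = some a) : l.idxOfNth a ((l.take i).count a) = i := by
  obtain ⟨hi, rfl⟩ := List.getElem?_eq_some_iff.1 h
  rw [← List.countBefore_eq_count_take, List.idxOfNth_countBefore_getElem]

lemma getElem?_eq_some_iff_exists_idxOfNth :
    l[i]? = some a ↔ ∃ k < l.count a, l.idxOfNth a k = i := by
  constructor
  · intro h
    obtain ⟨hi, rfl⟩ := List.getElem?_eq_some_iff.1 h
    exact ⟨_, List.countBefore_lt_count_getElem, List.idxOfNth_countBefore_getElem⟩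
  · rintro ⟨k, hk, rfl⟩
    rw [List.getElem?_eq_getElem (List.idxOfNth_lt_length_of_lt_count hk),
      List.getElem_idxOfNth_eq]

lemma count_take_mono (l : List α) (a : α) : Monotone fun i => (l.take i).count a :=
  fun _ _ hij => (List.take_sublist_take_left hij).count_le a

lemma count_take_map_range (f : ℕ → α) {m : ℕ} (hi : i ≤ m) (a : α) :
    (((List.range m).map f).take i).count a = #{p ∈ range i | f p = a} := by
  rw [← List.map_take, List.take_range, min_eq_left hi, ← Nat.count_eq_card_filter_range]
  simp [Nat.count, List.count, List.countP_map, Function.comp_def, beq_eq_decide]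

end StepPositions

section RowLengths

variable {n : ℕ} {s t : List Bool} {i k r : ℕ}

/-- The length of the `r`-th row, from the top and starting with `r = 0`, of the Ferrers board
with border `t`: the number of east steps before the `r`-th south step. -/
def rowLength (t : List Bool) (r : ℕ) : ℕ := (t.take (t.idxOfNth false r)).count true

lemma rowLength_mono (t : List Bool) : Monotone (rowLength t) := fun _ _ h =>
  count_take_mono t true (List.idxOfNth_mono h)

lemma rowLength_le_count (t : List Bool) (r : ℕ) : rowLength t r ≤ t.count true :=
  (List.take_sublist _ t).count_le true

lemma count_true_take_add_count_false_take (t : List Bool) (i : ℕ) :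
    (t.take i).count true + (t.take i).count false = min i t.length := by
  rw [List.count_true_add_count_false, List.length_take]

lemma idxOfNth_false (hr : r < t.count false) : t.idxOfNth false r = r + rowLength t r := by
  have hsum := count_true_take_add_count_false_take t (t.idxOfNth false r)
  rw [count_take_idxOfNth hr, min_eq_left List.idxOfNth_le_length] at hsum
  rw [← hsum, rowLength, add_comm]

lemma rowLength_le_of_lt_count (h : r < (t.take i).count false) :
    rowLength t r ≤ (t.take i).count true := by
  have hr : r < t.count false := h.trans_le ((List.take_sublist i t).count_le false)
  exact count_take_mono t true ((lt_count_take_iff hr).1 h).le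

lemma count_le_rowLength_of_count_le (hr : r < t.count false) (h : (t.take i).count false ≤ r) :
    (t.take i).count true ≤ rowLength t r :=
  count_take_mono t true (not_lt.1 ((lt_count_take_iff hr).not.1 h.not_gt))

lemma lt_rowLength_iff_idxOfNth_lt (hk : k < t.count true) :
    k < rowLength t r ↔ t.idxOfNth true k < t.idxOfNth false r :=
  lt_count_take_iff hk

lemma getElem?_eq_some_false_iff :
    t[i]? = some false ↔ ∃ r < t.count false, r + rowLength t r = i := by
  rw [getElem?_eq_some_iff_exists_idxOfNth]
  exact exists_congr fun r => and_congr_right fun hr => by rw [idxOfNth_false hr]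

lemma eq_of_getElem?_eq_some_iff (b : Bool) (hlen : s.length = t.length)
    (h : ∀ i : ℕ, s[i]? = some b ↔ t[i]? = some b) : s = t := by
  refine List.ext_getElem hlen fun i hs ht => ?_
  have hi := h i
  rw [List.getElem?_eq_getElem hs, List.getElem?_eq_getElem ht, Option.some_inj,
    Option.some_inj] at hi
  cases b
  exacts [Bool.eq_iff_iff.2 (by simpa using hi.not), Bool.eq_iff_iff.2 hi]

lemma eq_of_rowLength_eq (hlen : s.length = t.length) (hcount : s.count false = t.count false)
    (h : ∀ r < t.count false, rowLength s r = rowLength t r) : s = t := by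
  refine eq_of_getElem?_eq_some_iff false hlen fun i => ?_
  rw [getElem?_eq_some_false_iff, getElem?_eq_some_false_iff, hcount]
  exact exists_congr fun r => and_congr_right fun hr => by rw [h r hr]

lemma forall_count_false_le_count_true_iff :
    (∀ i, (t.take i).count false ≤ (t.take i).count true) ↔
      ∀ r < t.count false, r < rowLength t r := by
  refine ⟨fun h r hr => ?_, fun h i => ?_⟩
  · have hle := h (r + rowLength t r + 1)
    have hlt : r < (t.take (r + rowLength t r + 1)).count false :=
      (lt_count_take_iff hr).2 (by rw [idxOfNth_false hr]; exact Nat.lt_succ_self _)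
    have hsum := count_true_take_add_count_false_take t (r + rowLength t r + 1)
    omega
  · by_contra! hi
    have hX := h _ (hi.trans_le ((List.take_sublist i t).count_le false))
    exact hX.not_ge (rowLength_le_of_lt_count hi)

lemma IsDyckPath.count_false (h : IsDyckPath n t) : t.count false = n := by
  have := t.count_true_add_count_false
  have := h.1
  have := h.2.1
  omega

lemma IsDyckPath.lt_rowLength (h : IsDyckPath n t) (hr : r < n) : r < rowLength t r :=
  forall_count_false_le_count_true_iff.1 h.2.2 r (h.count_false.symm ▸ hr)

lemma IsDyckPath.rowLength_le (h : IsDyckPath n t) (r : ℕ) : rowLength t r ≤ n :=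
  h.2.1 ▸ rowLength_le_count t r

lemma weaklyBelow_iff_rowLength_le (hs : IsDyckPath n s) (ht : IsDyckPath n t) :
    WeaklyBelow s t ↔ ∀ r < n, rowLength s r ≤ rowLength t r := by
  have sum_eq (i : ℕ) : (s.take i).count true + (s.take i).count false =
      (t.take i).count true + (t.take i).count false := by
    simp only [count_true_take_add_count_false_take, hs.1, ht.1]
  simp only [WeaklyBelow, pathHeight]
  refine ⟨fun h r hr => ?_, fun h i => ?_⟩
  · have hsr : r < s.count false := hs.count_false.symm ▸ hr
    have hi := h (s.idxOfNth false r)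
    have := sum_eq (s.idxOfNth false r)
    rw [count_take_idxOfNth hsr] at hi this
    have := count_le_rowLength_of_count_le (i := s.idxOfNth false r) (ht.count_false.symm ▸ hr)
      (by omega)
    rw [rowLength]
    omega
  · by_contra! hi
    have := sum_eq i
    have hlt : (s.take i).count false < (t.take i).count false := by omega
    have hr := hlt.trans_le ((List.take_sublist i t).count_le false)
    have := h _ (ht.count_false ▸ hr)
    have := rowLength_le_of_lt_count hlt
    have := count_le_rowLength_of_count_le (hs.count_false.symm ▸ ht.count_false ▸ hr) le_rfl
    omega

lemma IsDyckPath.getElem?_eq_some_false_iff (h : IsDyckPath n t) :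
    t[i]? = some false ↔ ∃ r < n, r + rowLength t r = i := by
  rw [_root_.getElem?_eq_some_false_iff, h.count_false]

lemma IsDyckPath.getElem?_eq_some_true_iff_rowLength_lt (hs : IsDyckPath n s) (hr : r + 1 < n) :
    s[r + rowLength s (r + 1)]? = some true ↔ rowLength s r < rowLength s (r + 1) := by
  have hmono : rowLength s r ≤ rowLength s (r + 1) := rowLength_mono s r.le_succ
  have hrs : r + 1 < s.count false := hs.count_false.symm ▸ hr
  have hlen : s.idxOfNth false (r + 1) < s.length := List.idxOfNth_lt_length_of_lt_count hrs
  rw [idxOfNth_false hrs] at hlen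
  have htrue : s[r + rowLength s (r + 1)]? = some true ↔
      s[r + rowLength s (r + 1)]? ≠ some false := by
    rw [List.getElem?_eq_getElem (by omega)]
    simp
  rw [htrue, ← not_le, not_iff_not, hs.getElem?_eq_some_false_iff]
  constructor
  · rintro ⟨k, -, hk⟩
    obtain hkr | hrk := Nat.lt_or_ge r k
    · have : rowLength s (r + 1) ≤ rowLength s k := rowLength_mono s hkr
      omega
    · have := rowLength_mono s hrk
      omega
  · exact fun hle => ⟨r, by omega, by omega⟩

lemma hasSWPeak_iff_exists_rowLength_lt (hs : IsDyckPath n s) (ht : IsDyckPath n t) :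
    HasSWPeak n s t ↔ ∃ q r : Fin n, q ⋖ r ∧ rowLength s q < rowLength s r ∧
      rowLength s r < rowLength t q := by
  constructor
  · rintro ⟨i, j, hi, hi', -, htrue, hfalse⟩
    obtain ⟨r, hr, hri⟩ := hs.getElem?_eq_some_false_iff.1 hi'
    have hrs : r < s.count false := hs.count_false.symm ▸ hr
    rw [← hri, ← idxOfNth_false hrs] at htrue hfalse
    rw [count_take_idxOfNth hrs] at hfalse
    obtain ⟨q, rfl⟩ : ∃ q, r = q + 1 := Nat.exists_eq_add_one.2 (by omega)
    have hqt := count_le_rowLength_of_count_le (ht.count_false.symm ▸ (by omega : q < n))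
      (by omega : (t.take j).count false ≤ q)
    have hi_eq : i = q + rowLength s (q + 1) := by omega
    exact ⟨⟨q, by omega⟩, ⟨q + 1, hr⟩, Fin.covBy_iff.2 (Order.covBy_add_one q),
      (hs.getElem?_eq_some_true_iff_rowLength_lt hr).1 (hi_eq ▸ hi), htrue.trans_le hqt⟩
  · rintro ⟨⟨q, hq⟩, ⟨r, hr⟩, hqr, hlt, hltt⟩
    obtain rfl : q + 1 = r := Nat.covBy_iff_add_one_eq.1 (Fin.covBy_iff.1 hqr)
    have hrs : q + 1 < s.count false := hs.count_false.symm ▸ hr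
    have hqt : q < t.count false := ht.count_false.symm ▸ hq
    have hpos : q + rowLength s (q + 1) + 1 = s.idxOfNth false (q + 1) := by
      rw [idxOfNth_false hrs]
      omega
    refine ⟨q + rowLength s (q + 1), t.idxOfNth false q,
      (hs.getElem?_eq_some_true_iff_rowLength_lt hr).2 hlt,
      hs.getElem?_eq_some_false_iff.2 ⟨q + 1, hr, by omega⟩,
      ht.1 ▸ List.idxOfNth_le_length, ?_, ?_⟩
    · rwa [hpos]
    · rw [hpos, count_take_idxOfNth hrs, count_take_idxOfNth hqt]
      omega

/-- The path whose `r`-th south step is at position `r + x r`, so that its row lengths are `x`. -/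
def pathOfRowLengths (x : Fin n → ℕ) : List Bool :=
  (List.range (2 * n)).map fun p => decide (∀ r : Fin n, r + x r ≠ p)

lemma count_false_take_pathOfRowLengths {x : Fin n → ℕ} (hx : Monotone x) (hi : i ≤ 2 * n) :
    ((pathOfRowLengths x).take i).count false = #{r : Fin n | r + x r < i} := by
  have hinj : Function.Injective fun r : Fin n => r + x r :=
    (Fin.val_strictMono.add_monotone hx).injective
  rw [pathOfRowLengths, count_take_map_range _ hi, ← card_image_of_injective _ hinj]
  congr 1
  ext p
  simp only [mem_filter, mem_range, mem_image, mem_univ, true_and, decide_eq_false_iff_not,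
    not_forall, not_not]
  exact ⟨fun ⟨hp, r, hr⟩ => ⟨r, hr ▸ hp, hr⟩, fun ⟨r, hr, hrp⟩ => ⟨hrp ▸ hr, r, hrp⟩⟩

lemma length_pathOfRowLengths (x : Fin n → ℕ) : (pathOfRowLengths x).length = 2 * n := by
  simp [pathOfRowLengths]

lemma count_false_pathOfRowLengths {x : Fin n → ℕ} (hx : Monotone x) (hxn : ∀ r, x r ≤ n) :
    (pathOfRowLengths x).count false = n := by
  have h := count_false_take_pathOfRowLengths hx le_rfl
  rw [List.take_of_length_le (length_pathOfRowLengths x).le] at h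
  rw [h, filter_true_of_mem fun r _ => by have := hxn r; omega, card_univ, Fintype.card_fin]

lemma rowLength_pathOfRowLengths {x : Fin n → ℕ} (hx : Monotone x) (hxn : ∀ r, x r ≤ n)
    (r : Fin n) : rowLength (pathOfRowLengths x) r = x r := by
  have hr : (r : ℕ) < (pathOfRowLengths x).count false :=
    (count_false_pathOfRowLengths hx hxn).symm ▸ r.isLt
  have hi : r + x r < 2 * n := by have := hxn r; omega
  have hsouth : (pathOfRowLengths x)[r + x r]? = some false := by
    simp only [pathOfRowLengths, List.getElem?_map, List.getElem?_range hi, Option.map_some,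
      Option.some.injEq, decide_eq_false_iff_not, not_forall, not_not]
    exact ⟨r, rfl⟩
  have hcount : ((pathOfRowLengths x).take (r + x r)).count false = r := by
    simp only [count_false_take_pathOfRowLengths hx hi.le,
      (Fin.val_strictMono.add_monotone hx).lt_iff_lt, filter_gt_eq_Iio, Fin.card_Iio]
  have hpos := idxOfNth_count_take hsouth
  rw [hcount, idxOfNth_false hr] at hpos
  exact Nat.add_left_cancel hpos

lemma isDyckPath_pathOfRowLengths {x : Fin n → ℕ} (hx : Monotone x) (hxn : ∀ r, x r ≤ n)
    (hlt : ∀ r : Fin n, r < x r) : IsDyckPath n (pathOfRowLengths x) := by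
  have hfalse := count_false_pathOfRowLengths hx hxn
  refine ⟨length_pathOfRowLengths x, ?_, forall_count_false_le_count_true_iff.2 fun r hr => ?_⟩
  · have := (pathOfRowLengths x).count_true_add_count_false
    have := length_pathOfRowLengths x
    omega
  · rw [hfalse] at hr
    exact (hlt ⟨r, hr⟩).trans_eq (rowLength_pathOfRowLengths hx hxn ⟨r, hr⟩).symm

lemma monotone_of_mem_admissibleRows {X x : Fin n → ℕ} (hx : x ∈ admissibleRows X) :
    Monotone x :=
  (monotone_iff_forall_covBy x).2 fun q r hqr =>
    (hx.2 q r hqr).elim Eq.ge ((hx.1 q).2.trans ·)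

lemma mem_admissibleRows_iff (hs : IsDyckPath n s) (ht : IsDyckPath n t) :
    (fun r : Fin n => rowLength s r) ∈ admissibleRows (fun r : Fin n => rowLength t r) ↔
      WeaklyBelow s t ∧ ¬ HasSWPeak n s t := by
  rw [weaklyBelow_iff_rowLength_le hs ht, hasSWPeak_iff_exists_rowLength_lt hs ht]
  simp only [admissibleRows, Set.mem_ofPred_eq, not_exists, not_and, not_lt]
  refine and_congr ⟨fun h r hr => (h ⟨r, hr⟩).2, fun h r => ⟨hs.lt_rowLength r.isLt, h r r.isLt⟩⟩
    (forall₂_congr fun q r => forall_congr' fun hqr => ?_)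
  have : rowLength s q ≤ rowLength s r := rowLength_mono s hqr.le
  omega

lemma bijOn_rowLength (ht : IsDyckPath n t) :
    Set.BijOn (fun s (r : Fin n) => rowLength s r)
      {s | IsDyckPath n s ∧ WeaklyBelow s t ∧ ¬ HasSWPeak n s t}
      (admissibleRows fun r : Fin n => rowLength t r) := by
  refine ⟨fun s ⟨hs, h⟩ => (mem_admissibleRows_iff hs ht).2 h, fun s hs s' hs' heq => ?_,
    fun x hx => ?_⟩
  · refine eq_of_rowLength_eq (hs.1.1.trans hs'.1.1.symm)
      (hs.1.count_false.trans hs'.1.count_false.symm) fun r hr => ?_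
    exact congrFun heq ⟨r, hs'.1.count_false ▸ hr⟩
  · have hmono := monotone_of_mem_admissibleRows hx
    have hxn (r : Fin n) : x r ≤ n := (hx.1 r).2.trans (ht.rowLength_le r)
    have hrows : (fun r : Fin n => rowLength (pathOfRowLengths x) r) = x :=
      funext (rowLength_pathOfRowLengths hmono hxn)
    have hdyck := isDyckPath_pathOfRowLengths hmono hxn fun r => (hx.1 r).1
    exact ⟨_, ⟨hdyck, (mem_admissibleRows_iff hdyck ht).1 (by rwa [hrows])⟩, hrows⟩

end RowLengths

section Shape

variable {n : ℕ} {M : Finset (ℕ × ℕ)} {p q : ℕ × ℕ} {i x : ℕ}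

lemma IsPerfectMatching.eq_of_common_endpoint (hM : IsPerfectMatching n M) (hp : p ∈ M)
    (hq : q ∈ M) (hpx : p.1 = x ∨ p.2 = x) (hqx : q.1 = x ∨ q.2 = x) : p = q := by
  have := hM.1 p hp
  exact (hM.2 x (by omega) (by omega)).unique ⟨hp, hpx⟩ ⟨hq, hqx⟩

lemma length_shapeOf (n : ℕ) (M : Finset (ℕ × ℕ)) : (shapeOf n M).length = 2 * n := by
  simp [shapeOf]

lemma getElem?_shapeOf (n : ℕ) (M : Finset (ℕ × ℕ)) (hi : i < 2 * n) :
    (shapeOf n M)[i]? = some (decide (∃ p ∈ M, p.1 = i + 1)) := by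
  simp only [shapeOf, List.getElem?_map, List.getElem?_range hi, Option.map_some, mem_image]

lemma getElem?_shapeOf_eq_some_true_iff (hM : IsPerfectMatching n M) :
    (shapeOf n M)[i]? = some true ↔ ∃ p ∈ M, p.1 = i + 1 := by
  obtain hi | hi := lt_or_ge i (2 * n)
  · simp [getElem?_shapeOf n M hi]
  · have hnone : (shapeOf n M)[i]? = none :=
      List.getElem?_eq_none ((length_shapeOf n M).trans_le hi)
    simp only [hnone, reduceCtorEq, false_iff, not_exists, not_and]
    intro p hp
    have := hM.1 p hp
    omega

lemma exists_snd_eq_iff_not_exists_fst_eq (hM : IsPerfectMatching n M) (hi : i < 2 * n) :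
    (∃ p ∈ M, p.2 = i + 1) ↔ ¬ ∃ p ∈ M, p.1 = i + 1 := by
  obtain ⟨p, ⟨hp, hpi⟩, -⟩ := hM.2 (i + 1) (by omega) (by omega)
  have := hM.1 p hp
  have huniq (q) (hq : q ∈ M) (h : q.1 = i + 1 ∨ q.2 = i + 1) : q = p :=
    hM.eq_of_common_endpoint hq hp h hpi
  grind

lemma getElem?_shapeOf_eq_some_false_iff (hM : IsPerfectMatching n M) :
    (shapeOf n M)[i]? = some false ↔ ∃ p ∈ M, p.2 = i + 1 := by
  obtain hi | hi := lt_or_ge i (2 * n)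
  · rw [getElem?_shapeOf n M hi, exists_snd_eq_iff_not_exists_fst_eq hM hi]
    simp
  · have hnone : (shapeOf n M)[i]? = none :=
      List.getElem?_eq_none ((length_shapeOf n M).trans_le hi)
    simp only [hnone, reduceCtorEq, false_iff, not_exists, not_and]
    intro p hp
    have := hM.1 p hp
    omega

lemma card_filter_range_exists_eq_succ {α : Type*} {s : Finset α} {f : α → ℕ}
    (hf : Set.InjOn f s) (hpos : ∀ p ∈ s, 1 ≤ f p) (i : ℕ) :
    #{x ∈ range i | ∃ p ∈ s, f p = x + 1} = #{p ∈ s | f p ≤ i} := by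
  symm
  refine card_bij (fun p _ => f p - 1) (fun p hp => ?_) (fun p hp q hq h => ?_) fun x hx => ?_
  · obtain ⟨hp, hpi⟩ := mem_filter.1 hp
    have := hpos p hp
    exact mem_filter.2 ⟨mem_range.2 (by omega), p, hp, by omega⟩
  · have hp := (mem_filter.1 hp).1
    have hq := (mem_filter.1 hq).1
    have := hpos p hp
    have := hpos q hq
    exact hf hp hq (by omega)
  · obtain ⟨hx, p, hp, hpx⟩ := mem_filter.1 hx
    have := mem_range.1 hx
    exact ⟨p, mem_filter.2 ⟨hp, by omega⟩, by omega⟩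

lemma count_true_take_shapeOf (hM : IsPerfectMatching n M) (hi : i ≤ 2 * n) :
    ((shapeOf n M).take i).count true = #{p ∈ M | p.1 ≤ i} := by
  rw [shapeOf, count_take_map_range _ hi, ← card_filter_range_exists_eq_succ (f := Prod.fst)
    (fun p hp q hq h => hM.eq_of_common_endpoint hp hq (.inl h) (.inl rfl))
    fun p hp => (hM.1 p hp).2.1]
  simp only [mem_image, decide_eq_true_eq]

lemma count_false_take_shapeOf (hM : IsPerfectMatching n M) (hi : i ≤ 2 * n) :
    ((shapeOf n M).take i).count false = #{p ∈ M | p.2 ≤ i} := by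
  rw [shapeOf, count_take_map_range _ hi, ← card_filter_range_exists_eq_succ (f := Prod.snd)
    (fun p hp q hq h => hM.eq_of_common_endpoint hp hq (.inr h) (.inr rfl))
    fun p hp => (hM.1 p hp).2.1.trans (hM.1 p hp).1.le]
  refine congrArg card (filter_congr fun x hx => ?_)
  rw [exists_snd_eq_iff_not_exists_fst_eq hM ((mem_range.1 hx).trans_le hi),
    decide_eq_false_iff_not, mem_image]

lemma isDyckPath_shapeOf (hM : IsPerfectMatching n M) : IsDyckPath n (shapeOf n M) := by
  have hlen := length_shapeOf n M
  have htrue : (shapeOf n M).count true = #M := by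
    have h := count_true_take_shapeOf hM le_rfl
    rwa [List.take_of_length_le hlen.le, filter_true_of_mem fun p hp => by
      have := hM.1 p hp; omega] at h
  have hfalse : (shapeOf n M).count false = #M := by
    have h := count_false_take_shapeOf hM le_rfl
    rwa [List.take_of_length_le hlen.le, filter_true_of_mem fun p hp => (hM.1 p hp).2.2] at h
  refine ⟨hlen, ?_, fun i => ?_⟩
  · have := (shapeOf n M).count_true_add_count_false
    omega
  · rw [List.take_eq_take_min, count_true_take_shapeOf hM (by omega),
      count_false_take_shapeOf hM (by omega)]
    exact card_le_card <| monotone_filter_right _ fun p hp h => (hM.1 p hp).1.le.trans h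

end Shape

/-- The position in `[2n]` of the `k`-th opener of a matching of shape `t`. -/
def opener {n : ℕ} (t : List Bool) (k : Fin n) : ℕ := t.idxOfNth true k + 1

/-- The position in `[2n]` of the `r`-th closer of a matching of shape `t`. -/
def closer {n : ℕ} (t : List Bool) (r : Fin n) : ℕ := t.idxOfNth false r + 1

/-- The matching of shape `t` that corresponds to the full rook placement with a rook in row `r`
and column `π r` for every `r`: the `r`-th closer is matched with the `π r`-th opener. -/
def rookMatching {n : ℕ} (t : List Bool) (π : Equiv.Perm (Fin n)) : Finset (ℕ × ℕ) :=
  univ.image fun r => (opener t (π r), closer t r)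

section RookMatchings

variable {n : ℕ} {t : List Bool} {M : Finset (ℕ × ℕ)} {π : Equiv.Perm (Fin n)} {i x : ℕ}
  {k r : Fin n} {p : ℕ × ℕ}

lemma opener_strictMono (ht : IsDyckPath n t) : StrictMono (opener (n := n) t) := fun k l hkl =>
  Nat.add_lt_add_right ((List.idxOfNth_lt_idxOfNth_iff_of_lt_count (by simp [ht.2.1])).2 hkl) 1

lemma closer_strictMono (ht : IsDyckPath n t) : StrictMono (closer (n := n) t) := fun q r hqr =>
  Nat.add_lt_add_right
    ((List.idxOfNth_lt_idxOfNth_iff_of_lt_count (by simp [ht.count_false])).2 hqr) 1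

lemma opener_lt_closer_iff (ht : IsDyckPath n t) : opener t k < closer t r ↔ k < rowLength t r := by
  rw [opener, closer, Nat.add_lt_add_iff_right, lt_rowLength_iff_idxOfNth_lt (by simp [ht.2.1])]

lemma getElem?_eq_some_true_iff_exists_opener (ht : IsDyckPath n t) :
    t[i]? = some true ↔ ∃ k : Fin n, opener t k = i + 1 := by
  simp [getElem?_eq_some_iff_exists_idxOfNth, Fin.exists_iff, opener, ht.2.1]

lemma getElem?_eq_some_false_iff_exists_closer (ht : IsDyckPath n t) :
    t[i]? = some false ↔ ∃ r : Fin n, closer t r = i + 1 := by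
  simp [getElem?_eq_some_iff_exists_idxOfNth, Fin.exists_iff, closer, ht.count_false]

lemma opener_ne_closer (ht : IsDyckPath n t) (k r : Fin n) : opener t k ≠ closer t r := by
  intro h
  have htrue := (getElem?_eq_some_true_iff_exists_opener ht).2 ⟨k, rfl⟩
  have hfalse := (getElem?_eq_some_false_iff_exists_closer ht).2 ⟨r, h.symm⟩
  simp [htrue] at hfalse

lemma closer_le (ht : IsDyckPath n t) (r : Fin n) : closer t r ≤ 2 * n :=
  ht.1 ▸ List.idxOfNth_lt_length_of_lt_count (ht.count_false.symm ▸ r.isLt)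

lemma exists_opener_eq_or_closer_eq (ht : IsDyckPath n t) (hx : 1 ≤ x) (hxn : x ≤ 2 * n) :
    (∃ k : Fin n, opener t k = x) ∨ ∃ r : Fin n, closer t r = x := by
  obtain ⟨i, rfl⟩ := Nat.exists_eq_add_one.2 hx
  have hi : i < t.length := by have := ht.1; omega
  rw [← getElem?_eq_some_true_iff_exists_opener ht, ← getElem?_eq_some_false_iff_exists_closer ht,
    List.getElem?_eq_getElem hi, Option.some_inj, Option.some_inj]
  exact Bool.eq_false_or_eq_true _

lemma mem_rookMatching : p ∈ rookMatching t π ↔ ∃ r, (opener t (π r), closer t r) = p := by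
  simp [rookMatching]

lemma mk_mem_rookMatching_iff (ht : IsDyckPath n t) :
    (opener t k, closer t r) ∈ rookMatching t π ↔ π r = k := by
  simp only [rookMatching, mem_image, mem_univ, true_and, Prod.mk.injEq,
    (opener_strictMono ht).injective.eq_iff, (closer_strictMono ht).injective.eq_iff,
    exists_eq_right]

lemma isPerfectMatching_rookMatching (ht : IsDyckPath n t) (hπ : ∀ r, π r < rowLength t r) :
    IsPerfectMatching n (rookMatching t π) := by
  simp only [IsPerfectMatching, rookMatching, mem_image, mem_univ, true_and, forall_exists_index,
    forall_apply_eq_imp_iff]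
  refine ⟨fun r => ⟨(opener_lt_closer_iff ht).2 (hπ r), Nat.le_add_left .., closer_le ht r⟩,
    fun x hx hxn => ?_⟩
  obtain ⟨k, rfl⟩ | ⟨r, rfl⟩ := exists_opener_eq_or_closer_eq ht hx hxn
  · refine ⟨_, ⟨⟨π.symm k, rfl⟩, .inl <| by rw [π.apply_symm_apply]⟩, ?_⟩
    rintro _ ⟨⟨r, rfl⟩, h | h⟩
    · rw [← (opener_strictMono ht).injective h, π.symm_apply_apply]
    · exact absurd h.symm (opener_ne_closer ht k r)
  · refine ⟨_, ⟨⟨r, rfl⟩, .inr rfl⟩, ?_⟩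
    rintro _ ⟨⟨q, rfl⟩, h | h⟩
    · exact absurd h (opener_ne_closer ht _ r)
    · rw [(closer_strictMono ht).injective h]

lemma shapeOf_rookMatching (ht : IsDyckPath n t) (hπ : ∀ r, π r < rowLength t r) :
    shapeOf n (rookMatching t π) = t := by
  refine eq_of_getElem?_eq_some_iff true ((length_shapeOf n _).trans ht.1.symm) fun i => ?_
  rw [getElem?_shapeOf_eq_some_true_iff (isPerfectMatching_rookMatching ht hπ),
    getElem?_eq_some_true_iff_exists_opener ht, π.surjective.exists]
  simp [mem_rookMatching]

lemma exists_opener_eq_fst (ht : IsDyckPath n t) (hM : IsPerfectMatching n M)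
    (hshape : shapeOf n M = t) (hp : p ∈ M) : ∃ k : Fin n, opener t k = p.1 := by
  obtain ⟨i, hi⟩ := Nat.exists_eq_add_one.2 (hM.1 p hp).2.1
  rw [hi, ← getElem?_eq_some_true_iff_exists_opener ht, ← hshape,
    getElem?_shapeOf_eq_some_true_iff hM]
  exact ⟨p, hp, hi⟩

lemma exists_closer_eq_snd (ht : IsDyckPath n t) (hM : IsPerfectMatching n M)
    (hshape : shapeOf n M = t) (hp : p ∈ M) : ∃ r : Fin n, closer t r = p.2 := by
  obtain ⟨i, hi⟩ := Nat.exists_eq_add_one.2 ((hM.1 p hp).2.1.trans (hM.1 p hp).1.le)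
  rw [hi, ← getElem?_eq_some_false_iff_exists_closer ht, ← hshape,
    getElem?_shapeOf_eq_some_false_iff hM]
  exact ⟨p, hp, hi⟩

lemma exists_mk_closer_mem (ht : IsDyckPath n t) (hM : IsPerfectMatching n M)
    (hshape : shapeOf n M = t) (r : Fin n) : ∃ k : Fin n, (opener t k, closer t r) ∈ M := by
  have hr := (getElem?_eq_some_false_iff_exists_closer ht).2 ⟨r, rfl⟩
  rw [← hshape, getElem?_shapeOf_eq_some_false_iff hM, hshape] at hr
  obtain ⟨p, hp, hpr⟩ := hr
  obtain ⟨k, hk⟩ := exists_opener_eq_fst ht hM hshape hp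
  exact ⟨k, by rwa [hk, closer, ← hpr]⟩

lemma exists_rookMatching_eq (ht : IsDyckPath n t) (hM : IsPerfectMatching n M)
    (hshape : shapeOf n M = t) :
    ∃ π : Equiv.Perm (Fin n), (∀ r, π r < rowLength t r) ∧ rookMatching t π = M := by
  choose col hcol using exists_mk_closer_mem ht hM hshape
  have col_injective : Function.Injective col := fun q r hqr =>
    (closer_strictMono ht).injective <| congrArg Prod.snd <|
      hM.eq_of_common_endpoint (hcol q) (hcol r) (.inl rfl) (.inl <| by rw [hqr])
  refine ⟨.ofBijective col (Finite.injective_iff_bijective.1 col_injective), fun r =>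
    (opener_lt_closer_iff ht).1 (hM.1 _ (hcol r)).1, ?_⟩
  ext p
  simp only [rookMatching, mem_image, mem_univ, true_and, Equiv.ofBijective_apply]
  refine ⟨fun ⟨r, hr⟩ => hr ▸ hcol r, fun hp => ?_⟩
  obtain ⟨r, hr⟩ := exists_closer_eq_snd ht hM hshape hp
  exact ⟨r, hM.eq_of_common_endpoint (hcol r) hp (.inr hr) (.inr rfl)⟩

lemma rookMatching_injective (ht : IsDyckPath n t) :
    Function.Injective (rookMatching (n := n) t) := fun π σ h => by
  ext1 r
  exact ((mk_mem_rookMatching_iff ht).1 <| h ▸ (mk_mem_rookMatching_iff ht).2 rfl).symm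

end RookMatchings

section Patterns

variable {n : ℕ} {t : List Bool} {M : Finset (ℕ × ℕ)} {π : Equiv.Perm (Fin n)}

lemma matchContains_p213_iff : MatchContains p213 M ↔ ∃ a b c d e g, a < b ∧ b < c ∧ c < d ∧
    d < e ∧ e < g ∧ (a, e) ∈ M ∧ (b, g) ∈ M ∧ (c, d) ∈ M := by
  constructor
  · rintro ⟨f, hf, hfM⟩
    exact ⟨f 0, f 1, f 2, f 3, f 4, f 5, hf (by decide), hf (by decide), hf (by decide),
      hf (by decide), hf (by decide), hfM 0, hfM 1, hfM 2⟩
  · rintro ⟨a, b, c, d, e, g, hab, hbc, hcd, hde, heg, hae, hbg, hcd'⟩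
    refine ⟨![a, b, c, d, e, g], ?_, fun k => ?_⟩
    · simp [hab, hbc, hcd, hde, heg]
    · fin_cases k
      exacts [hae, hbg, hcd']

lemma matchContains_p321_iff : MatchContains p321 M ↔ ∃ a b c d e g, a < b ∧ b < c ∧ c < d ∧
    d < e ∧ e < g ∧ (a, d) ∈ M ∧ (b, e) ∈ M ∧ (c, g) ∈ M := by
  constructor
  · rintro ⟨f, hf, hfM⟩
    exact ⟨f 0, f 1, f 2, f 3, f 4, f 5, hf (by decide), hf (by decide), hf (by decide),
      hf (by decide), hf (by decide), hfM 0, hfM 1, hfM 2⟩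
  · rintro ⟨a, b, c, d, e, g, hab, hbc, hcd, hde, heg, had, hbe, hcg⟩
    refine ⟨![a, b, c, d, e, g], ?_, fun k => ?_⟩
    · simp [hab, hbc, hcd, hde, heg]
    · fin_cases k
      exacts [had, hbe, hcg]

lemma matchContains_p213_rookMatching_iff (ht : IsDyckPath n t)
    (hπ : ∀ r, π r < rowLength t r) : MatchContains p213 (rookMatching t π) ↔
      ∃ a b c, a < b ∧ b < c ∧ π b < π c ∧ π c < π a := by
  rw [matchContains_p213_iff]
  constructor
  · rintro ⟨_, _, _, _, _, _, h₁, h₂, -, h₄, h₅, hb, hc, ha⟩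
    obtain ⟨a, ha⟩ := mem_rookMatching.1 ha
    obtain ⟨b, hb⟩ := mem_rookMatching.1 hb
    obtain ⟨c, hc⟩ := mem_rookMatching.1 hc
    cases ha; cases hb; cases hc
    exact ⟨a, b, c, (closer_strictMono ht).lt_iff_lt.1 h₄, (closer_strictMono ht).lt_iff_lt.1 h₅,
      (opener_strictMono ht).lt_iff_lt.1 h₁, (opener_strictMono ht).lt_iff_lt.1 h₂⟩
  · rintro ⟨a, b, c, hab, hbc, hbc', hca'⟩
    exact ⟨_, _, _, _, _, _, opener_strictMono ht hbc', opener_strictMono ht hca',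
      (opener_lt_closer_iff ht).2 (hπ a), closer_strictMono ht hab, closer_strictMono ht hbc,
      mem_rookMatching.2 ⟨b, rfl⟩, mem_rookMatching.2 ⟨c, rfl⟩, mem_rookMatching.2 ⟨a, rfl⟩⟩

lemma matchContains_p321_rookMatching_iff (ht : IsDyckPath n t) :
    MatchContains p321 (rookMatching t π) ↔
      ∃ a b c, a < b ∧ b < c ∧ π a < π b ∧ π b < π c ∧ π c < rowLength t a := by
  rw [matchContains_p321_iff]
  constructor
  · rintro ⟨_, _, _, _, _, _, h₁, h₂, h₃, h₄, h₅, ha, hb, hc⟩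
    obtain ⟨a, ha⟩ := mem_rookMatching.1 ha
    obtain ⟨b, hb⟩ := mem_rookMatching.1 hb
    obtain ⟨c, hc⟩ := mem_rookMatching.1 hc
    cases ha; cases hb; cases hc
    exact ⟨a, b, c, (closer_strictMono ht).lt_iff_lt.1 h₄, (closer_strictMono ht).lt_iff_lt.1 h₅,
      (opener_strictMono ht).lt_iff_lt.1 h₁, (opener_strictMono ht).lt_iff_lt.1 h₂,
      (opener_lt_closer_iff ht).1 h₃⟩
  · rintro ⟨a, b, c, hab, hbc, hab', hbc', hca⟩
    exact ⟨_, _, _, _, _, _, opener_strictMono ht hab', opener_strictMono ht hbc',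
      (opener_lt_closer_iff ht).2 hca, closer_strictMono ht hab, closer_strictMono ht hbc,
      mem_rookMatching.2 ⟨a, rfl⟩, mem_rookMatching.2 ⟨b, rfl⟩, mem_rookMatching.2 ⟨c, rfl⟩⟩

lemma matchAvoids_rookMatching_iff (ht : IsDyckPath n t) (hπ : ∀ r, π r < rowLength t r) :
    (MatchAvoids p213 (rookMatching t π) ∧ MatchAvoids p321 (rookMatching t π)) ↔
      ∀ a b c, ¬ IsForbiddenTriple (fun r : Fin n => rowLength t r) π a b c := by
  rw [MatchAvoids, MatchAvoids, matchContains_p213_rookMatching_iff ht hπ,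
    matchContains_p321_rookMatching_iff ht]
  simp only [IsForbiddenTriple, not_exists, ← forall_and]
  refine forall₃_congr fun a b c => ?_
  have := hπ a
  rw [← not_or, not_iff_not]
  grind

lemma bijOn_rookMatching (ht : IsDyckPath n t) :
    Set.BijOn (rookMatching t)
      {π : Equiv.Perm (Fin n) | (∀ r, π r < rowLength t r) ∧
        ∀ a b c, ¬ IsForbiddenTriple (fun r : Fin n => rowLength t r) π a b c}
      {M | IsPerfectMatching n M ∧ MatchAvoids p213 M ∧ MatchAvoids p321 M ∧
        shapeOf n M = t} := by
  refine ⟨fun π ⟨hπ, havoid⟩ => ?_, (rookMatching_injective ht).injOn, ?_⟩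
  · obtain ⟨h213, h321⟩ := (matchAvoids_rookMatching_iff ht hπ).2 havoid
    exact ⟨isPerfectMatching_rookMatching ht hπ, h213, h321, shapeOf_rookMatching ht hπ⟩
  · rintro M ⟨hM, h213, h321, hshape⟩
    obtain ⟨π, hπ, rfl⟩ := exists_rookMatching_eq ht hM hshape
    exact ⟨π, ⟨hπ, (matchAvoids_rookMatching_iff ht hπ).1 ⟨h213, h321⟩⟩, rfl⟩

theorem ncard_matchings_of_shape_eq (ht : IsDyckPath n t) :
    {M : Finset (ℕ × ℕ) | IsPerfectMatching n M ∧ MatchAvoids p213 M ∧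
      MatchAvoids p321 M ∧ shapeOf n M = t}.ncard =
    {s : List Bool | IsDyckPath n s ∧ WeaklyBelow s t ∧ ¬ HasSWPeak n s t}.ncard := by
  rw [← (bijOn_rookMatching ht).ncard_eq, (bijOn_rowLength ht).ncard_eq]
  exact (bijOn_shiftedLehmer (fun _ _ h => rowLength_mono t h) fun r => ht.rowLength_le r).ncard_eq

end Patterns

section Totals

lemma ncard_eq_sum_ncard_fiberwise {α γ : Type*} {A : Set α} {f : α → γ} {C : Finset γ}
    (hA : A.Finite) (hf : Set.MapsTo f A C) :
    A.ncard = ∑ c ∈ C, {a ∈ A | f a = c}.ncard := by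
  classical
  lift A to Finset α using hA
  rw [Set.ncard_coe_finset, card_eq_sum_card_fiberwise hf]
  refine sum_congr rfl fun c _ => ?_
  rw [← Set.ncard_coe_finset, coe_filter]
  rfl

lemma finite_isDyckPath (n : ℕ) : {t | IsDyckPath n t}.Finite :=
  (List.finite_length_eq Bool (2 * n)).subset fun _ ht => ht.1

lemma finite_isPerfectMatching (n : ℕ) : {M | IsPerfectMatching n M}.Finite := by
  refine (finite_toSet (Icc 1 (2 * n) ×ˢ Icc 1 (2 * n)).powerset).subset fun M hM =>
    mem_coe.2 <| mem_powerset.2 fun p hp => ?_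
  have := hM.1 p hp
  simp only [mem_product, mem_Icc]
  omega

lemma mcount2_eq_sum_ncard_shapeOf_eq {k : ℕ} (σ τ : Equiv.Perm (Fin k)) (n : ℕ) :
    mcount2 σ τ n = ∑ t ∈ (finite_isDyckPath n).toFinset,
      {M : Finset (ℕ × ℕ) | IsPerfectMatching n M ∧ MatchAvoids σ M ∧ MatchAvoids τ M ∧
        shapeOf n M = t}.ncard := by
  rw [mcount2, ncard_eq_sum_ncard_fiberwise (f := shapeOf n)
    ((finite_isPerfectMatching n).subset fun M hM => hM.1)
    fun M hM => mem_coe.2 <| (finite_isDyckPath n).mem_toFinset.2 (isDyckPath_shapeOf hM.1)]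
  simp only [Set.mem_ofPred_eq, and_assoc]

lemma ncard_pairs_eq_sum_ncard_lower (n : ℕ) (P : List Bool → List Bool → Prop) :
    {st : List Bool × List Bool | IsDyckPath n st.2 ∧ IsDyckPath n st.1 ∧ P st.1 st.2}.ncard =
      ∑ t ∈ (finite_isDyckPath n).toFinset, {s | IsDyckPath n s ∧ P s t}.ncard := by
  rw [ncard_eq_sum_ncard_fiberwise (f := Prod.snd)
    (((finite_isDyckPath n).prod (finite_isDyckPath n)).subset fun st hst => ⟨hst.2.1, hst.1⟩)
    fun st hst => mem_coe.2 <| (finite_isDyckPath n).mem_toFinset.2 hst.1]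
  refine sum_congr rfl fun t ht => ?_
  rw [← Set.ncard_image_of_injective {s | IsDyckPath n s ∧ P s t} (Prod.mk_left_injective t)]
  congr 1 with ⟨s, u⟩
  have ht : IsDyckPath n t := (finite_isDyckPath n).mem_toFinset.1 ht
  simp only [Set.mem_ofPred_eq, Set.mem_image, Prod.mk.injEq]
  grind

end Totals

/-- For every `F ∈ F_n`, `|M_F(213,321)|` equals the number of Dyck paths
`D_0` weakly below `D_F` having no peak strictly southwest of a vertex of `D_F`;
consequently `|M_n(213,321)| = |A²_n|`. -/
theorem card_matchings_213_321 (n : ℕ) (hn : 0 < n) :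
    (∀ t : List Bool, IsDyckPath n t →
      {M : Finset (ℕ × ℕ) | IsPerfectMatching n M ∧ MatchAvoids p213 M ∧
          MatchAvoids p321 M ∧ shapeOf n M = t}.ncard =
      {s : List Bool | IsDyckPath n s ∧ WeaklyBelow s t ∧ ¬ HasSWPeak n s t}.ncard) ∧
    mcount2 p213 p321 n =
      {st : List Bool × List Bool | IsDyckPath n st.2 ∧ IsDyckPath n st.1 ∧
          WeaklyBelow st.1 st.2 ∧ ¬ HasSWPeak n st.1 st.2}.ncard := by
  refine ⟨fun t ht => ncard_matchings_of_shape_eq ht, ?_⟩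
  rw [mcount2_eq_sum_ncard_shapeOf_eq,
    ncard_pairs_eq_sum_ncard_lower n fun s t => WeaklyBelow s t ∧ ¬ HasSWPeak n s t]
  exact sum_congr rfl fun t ht =>
    ncard_matchings_of_shape_eq ((finite_isDyckPath n).mem_toFinset.1 ht)
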